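/- arXiv:1710.06760 — 4 statements merged into one kernel-verified Lean document; each statement's English description precedes it below -/
import Mathlib

section
/- For every irrational real number α there exist a constant C > 0 and a sequence (γ_j)_{j≥1} of real numbers with |γ_j| ≤ C j^{1/2} for all j ≥ 1, such that the set of integers j ≥ 1 for which √(α² j² + γ_j²) is an integer is infinite. In particular, for all constants C' > 0 and θ > 0 there are infinitely many j with inf_{τ ∈ ℤ} |τ + √(α² j² + γ_j²)| < C' j^{−θ}, i.e. the Diophantine condition ensuring global hypoellipticity of the perturbed operator D_t + α D_x + 𝓡 fails. -/
/-!
A right triangle with leg `|x|` and hypotenuse `⌈|x|⌉` has second leg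
`√(⌈|x|⌉² - x²) ≤ √(2|x| + 1)`, because `⌈|x|⌉ < |x| + 1`. Taking `x = α j`, a perturbation of size
`O(j^{1/2})` therefore moves the eigenvalue `|α| j` up to the integer `⌈|α| j⌉`, for every `j`.
-/

/-- The length of the second leg of the right triangle with leg `|x|` and hypotenuse `⌈|x|⌉`.
It is the perturbation which moves an eigenvalue of modulus `|x|` to the next integer. -/
noncomputable def ceilLeg (x : ℝ) : ℝ :=
  √((⌈|x|⌉ : ℝ) ^ 2 - x ^ 2)

theorem ceilLeg_nonneg (x : ℝ) : 0 ≤ ceilLeg x :=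
  Real.sqrt_nonneg _

theorem ceil_abs_nonneg (x : ℝ) : (0 : ℝ) ≤ ⌈|x|⌉ :=
  (abs_nonneg x).trans (Int.le_ceil _)

theorem sq_le_ceil_abs_sq (x : ℝ) : x ^ 2 ≤ (⌈|x|⌉ : ℝ) ^ 2 :=
  sq_le_sq.mpr <| (Int.le_ceil |x|).trans (le_abs_self _)

theorem ceil_abs_sq_sub_sq_le (x : ℝ) : (⌈|x|⌉ : ℝ) ^ 2 - x ^ 2 ≤ 2 * |x| + 1 :=
  calc (⌈|x|⌉ : ℝ) ^ 2 - x ^ 2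
      ≤ (|x| + 1) ^ 2 - x ^ 2 :=
        sub_le_sub_right
          (pow_le_pow_left₀ (ceil_abs_nonneg x) (Int.ceil_lt_add_one |x|).le 2) _
    _ = 2 * |x| + 1 := by rw [← sq_abs x]; ring

theorem sqrt_sq_add_ceilLeg_sq (x : ℝ) : √(x ^ 2 + ceilLeg x ^ 2) = ⌈|x|⌉ := by
  rw [ceilLeg, Real.sq_sqrt (sub_nonneg.mpr (sq_le_ceil_abs_sq x)), add_sub_cancel,
    Real.sqrt_sq (ceil_abs_nonneg x)]

theorem ceilLeg_mul_le (a : ℝ) {t : ℝ} (ht : 1 ≤ t) :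
    ceilLeg (a * t) ≤ √(2 * |a| + 1) * t ^ ((1 : ℝ) / 2) := by
  have t_nonneg : 0 ≤ t := zero_le_one.trans ht
  have gap_le : (⌈|a * t|⌉ : ℝ) ^ 2 - (a * t) ^ 2 ≤ (2 * |a| + 1) * t :=
    calc (⌈|a * t|⌉ : ℝ) ^ 2 - (a * t) ^ 2
        ≤ 2 * |a * t| + 1 := ceil_abs_sq_sub_sq_le _
      _ ≤ 2 * |a * t| + t := by gcongr
      _ = (2 * |a| + 1) * t := by rw [abs_mul, abs_of_nonneg t_nonneg]; ring
  rw [← Real.sqrt_eq_rpow, ← Real.sqrt_mul (by positivity)]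
  exact Real.sqrt_le_sqrt gap_le

theorem exists_abs_intCast_add_lt {x ε : ℝ} (hx : ∃ n : ℤ, x = n) (hε : 0 < ε) :
    ∃ τ : ℤ, |(τ : ℝ) + x| < ε := by
  obtain ⟨n, rfl⟩ := hx
  exact ⟨-n, by simpa using hε⟩

theorem infinite_setOf_le_and {p : ℕ → Prop} {k : ℕ} (hp : ∀ j, k ≤ j → p j) :
    {j | k ≤ j ∧ p j}.Infinite :=
  (Set.Ici_infinite k).mono fun j hj => ⟨hj, hp j hj⟩

theorem stmt2_general (α : ℝ) :
    ∃ C > (0 : ℝ), ∃ γ : ℕ → ℝ,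
      (∀ j : ℕ, 1 ≤ j → |γ j| ≤ C * (j : ℝ) ^ ((1 : ℝ) / 2)) ∧
      ∀ j : ℕ, ∃ n : ℤ, √(α ^ 2 * j ^ 2 + γ j ^ 2) = n := by
  refine ⟨√(2 * |α| + 1), by positivity, fun j => ceilLeg (α * j), fun j hj => ?_, fun j => ?_⟩
  · rw [abs_of_nonneg (ceilLeg_nonneg _)]
    exact ceilLeg_mul_le α (mod_cast hj)
  · exact ⟨⌈|α * j|⌉, by rw [← mul_pow, sqrt_sq_add_ceilLeg_sq]⟩

/-- For any irrational `α` there is a perturbation sequence `γ_j` of order `1/2`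
such that `√(α² j² + γ_j²)` is an integer infinitely often; in particular the
Diophantine condition for global hypoellipticity fails. -/
theorem stmt2 (α : ℝ) (hα : Irrational α) :
    ∃ C > (0:ℝ), ∃ γ : ℕ → ℝ,
      (∀ j : ℕ, 1 ≤ j → |γ j| ≤ C * (j:ℝ) ^ ((1:ℝ)/2)) ∧
      {j : ℕ | 1 ≤ j ∧ ∃ n : ℤ, Real.sqrt (α^2 * j^2 + γ j ^ 2) = n}.Infinite ∧
      ∀ C' > (0:ℝ), ∀ θ > (0:ℝ),
        {j : ℕ | 1 ≤ j ∧ ∃ τ : ℤ,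
          |(τ:ℝ) + Real.sqrt (α^2 * j^2 + γ j ^ 2)| < C' * (j:ℝ) ^ (-θ)}.Infinite := by
  obtain ⟨C, hC, γ, hγ, hint⟩ := stmt2_general α
  exact ⟨C, hC, γ, hγ, infinite_setOf_le_and fun j _ => hint j, fun C' hC' θ _ =>
    infinite_setOf_le_and fun j hj => exists_abs_intCast_add_lt (hint j) (by positivity)⟩
end

section
/- Let d ≥ 1 and let A, B be d×d complex matrices. Suppose σ₀ ∈ ℂ is a simple eigenvalue of A (a root of multiplicity one of the characteristic polynomial of A) with eigenvector v₀ ≠ 0. Then there exists ε₀ > 0 and functions σ : {ε ∈ ℂ : |ε| < ε₀} → ℂ and v : {ε ∈ ℂ : |ε| < ε₀} → ℂ^d, both analytic on this disc, such that σ(0) = σ₀, v(0) = v₀, and for every |ε| < ε₀: v(ε) ≠ 0, (A + εB) v(ε) = σ(ε) v(ε), and σ(ε) is a simple eigenvalue of A + εB. -/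
/-!
Let `A` be an analytic family of matrices. Simplicity of the eigenvalue `σ₀` of `A x₀` says that
`∂_z det (z - A x)` does not vanish at `(x₀, σ₀)`, so the implicit function theorem continues `σ₀`
to an analytic simple root `σ` of the characteristic polynomial. Then
`(σ x - A x) * adj (σ x - A x) = det (σ x - A x) • 1 = 0`, so every vector in the range of
`adj (σ x - A x)` satisfies the eigenvector equation for `σ x`. At `x₀` this adjugate scales `v₀`
by `χ'(σ₀) ≠ 0`, where `χ` is the characteristic polynomial of `A x₀`, so
`v x = χ'(σ₀)⁻¹ • adj (σ x - A x) v₀` is an analytic eigenvector passing through `v₀`.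
-/

open Matrix Polynomial
open scoped Topology ContDiff

section Algebra

variable {R n : Type*} [CommRing R] [Fintype n] [DecidableEq n]
  {M : Matrix n n R} {μ : R} {v : n → R}

theorem rootMultiplicity_eq_one_iff_isRoot_and_not_isRoot_derivative {p : R[X]} (hp : p ≠ 0)
    {t : R} : p.rootMultiplicity t = 1 ↔ p.IsRoot t ∧ ¬ p.derivative.IsRoot t := by
  have pos_iff := rootMultiplicity_pos hp (x := t)
  have one_lt_iff := one_lt_rootMultiplicity_iff_isRoot hp (t := t)
  grind

theorem rootMultiplicity_charpoly_eq_one_iff [Nontrivial R] :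
    M.charpoly.rootMultiplicity μ = 1 ↔ M.charpoly.IsRoot μ ∧ ¬ M.charpoly.derivative.IsRoot μ :=
  rootMultiplicity_eq_one_iff_isRoot_and_not_isRoot_derivative M.charpoly_monic.ne_zero

theorem charmatrix_mulVec_C_of_mulVec_eq_smul (h : M *ᵥ v = μ • v) :
    M.charmatrix *ᵥ (C ∘ v) = (X - C μ) • (C ∘ v) := by
  have map_mulVec : M.map C *ᵥ (C ∘ v) = C μ • (C ∘ v) := by
    ext1 i
    rw [← RingHom.map_mulVec, h]
    simp
  rw [charmatrix, sub_mulVec, sub_smul, ← map_mulVec]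
  simp [scalar_apply, ← smul_one_eq_diagonal, smul_mulVec]

theorem charpoly_smul_C_of_mulVec_eq_smul (h : M *ᵥ v = μ • v) :
    M.charpoly • (C ∘ v) = (X - C μ) • (M.charmatrix.adjugate *ᵥ (C ∘ v)) := by
  rw [← mulVec_smul, ← charmatrix_mulVec_C_of_mulVec_eq_smul h, mulVec_mulVec, adjugate_mul,
    smul_mulVec, one_mulVec, charpoly]

theorem eval_charmatrix_adjugate_mulVec_C (M : Matrix n n R) (v : n → R) (μ : R) (i : n) :
    ((M.charmatrix.adjugate *ᵥ (C ∘ v)) i).eval μ = ((scalar n μ - M).adjugate *ᵥ v) i := by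
  have map_charmatrix : (evalRingHom μ).mapMatrix M.charmatrix = scalar n μ - M := by
    ext i j
    by_cases hij : i = j <;> simp [hij]
  rw [← map_charmatrix, ← RingHom.map_adjugate, ← coe_evalRingHom, RingHom.map_mulVec]
  congr 2
  ext j
  simp

theorem adjugate_scalar_sub_mulVec_of_mulVec_eq_smul (h : M *ᵥ v = μ • v) :
    (scalar n μ - M).adjugate *ᵥ v = M.charpoly.derivative.eval μ • v := by
  ext i
  -- Differentiating `charpoly * v = (X - μ) * adj (X - M) v` at `μ` leaves only `adj (μ - M) v`.
  have derivative_eq := congrArg (fun p => (derivative p).eval μ)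
    (congrFun (charpoly_smul_C_of_mulVec_eq_smul h) i)
  simpa [derivative_mul, eval_charmatrix_adjugate_mulVec_C] using derivative_eq.symm

theorem mulVec_adjugate_scalar_sub_mulVec_of_isRoot_charpoly (h : M.charpoly.IsRoot μ)
    (w : n → R) :
    M *ᵥ ((scalar n μ - M).adjugate *ᵥ w) = μ • ((scalar n μ - M).adjugate *ᵥ w) := by
  have det_eq_zero : (scalar n μ - M).det = 0 := by rw [← eval_charpoly, h]
  have mulVec_eq_zero : (scalar n μ - M) *ᵥ ((scalar n μ - M).adjugate *ᵥ w) = 0 := by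
    rw [mulVec_mulVec, mul_adjugate, det_eq_zero, zero_smul, zero_mulVec]
  rw [sub_mulVec, sub_eq_zero] at mulVec_eq_zero
  rw [← mulVec_eq_zero, scalar_apply, ← smul_one_eq_diagonal, smul_mulVec, one_mulVec]

end Algebra

section AnalyticMatrix

variable {𝕜 E n : Type*} [NontriviallyNormedField 𝕜] [NormedAddCommGroup E] [NormedSpace 𝕜 E]
  [Fintype n] [DecidableEq n] {A : E → Matrix n n 𝕜} {x₀ : E}

theorem analyticAt_det (hA : ∀ i j, AnalyticAt 𝕜 (A · i j) x₀) :
    AnalyticAt 𝕜 (fun x => (A x).det) x₀ := by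
  simp only [det_apply']
  fun_prop

theorem analyticAt_adjugate_apply (hA : ∀ i j, AnalyticAt 𝕜 (A · i j) x₀) (i j : n) :
    AnalyticAt 𝕜 (fun x => (A x).adjugate i j) x₀ := by
  simp only [adjugate_apply]
  refine analyticAt_det fun k l => ?_
  by_cases hk : k = j
  · simpa [updateRow_apply, hk] using analyticAt_const
  · simpa [updateRow_apply, hk] using hA k l

theorem analyticAt_scalar_sub_apply {σ : E → 𝕜} (hσ : AnalyticAt 𝕜 σ x₀)
    (hA : ∀ i j, AnalyticAt 𝕜 (A · i j) x₀) (i j : n) :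
    AnalyticAt 𝕜 (fun x => (scalar n (σ x) - A x) i j) x₀ := by
  by_cases hij : i = j
  · simpa [hij] using hσ.fun_sub (hA j j)
  · simpa [hij] using (hA i j).fun_neg

theorem analyticAt_eval_charpoly {z₀ : 𝕜} (hA : ∀ i j, AnalyticAt 𝕜 (A · i j) x₀) :
    AnalyticAt 𝕜 (fun p : E × 𝕜 => (A p.1).charpoly.eval p.2) (x₀, z₀) := by
  simp only [eval_charpoly]
  exact analyticAt_det <| analyticAt_scalar_sub_apply (A := fun p : E × 𝕜 => A p.1) analyticAt_snd
    fun i j => (hA i j).comp_of_eq analyticAt_fst rfl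

end AnalyticMatrix

section ImplicitFunction

variable {𝕜 E F : Type*} [NormedAddCommGroup E] [NormedAddCommGroup F]

theorem deriv_snd_eq_fderiv_apply [NontriviallyNormedField 𝕜] [NormedSpace 𝕜 E]
    [NormedSpace 𝕜 F] {f : E × 𝕜 → F} {p : E × 𝕜} (hf : DifferentiableAt 𝕜 f p) :
    deriv (fun z => f (p.1, z)) p.2 = fderiv 𝕜 f p (0, 1) :=
  (hf.hasFDerivAt.comp_hasDerivAt p.2
    ((hasDerivAt_const p.2 p.1).prodMk (hasDerivAt_id p.2))).deriv

theorem eventually_deriv_snd_ne_zero [NontriviallyNormedField 𝕜] [NormedSpace 𝕜 E]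
    [NormedSpace 𝕜 F] [CompleteSpace F] {f : E × 𝕜 → F} {p₀ : E × 𝕜}
    (hf : AnalyticAt 𝕜 f p₀) (hderiv : deriv (fun z => f (p₀.1, z)) p₀.2 ≠ 0) :
    ∀ᶠ p in 𝓝 p₀, deriv (fun z => f (p.1, z)) p.2 ≠ 0 := by
  have fderiv_ne_zero : ∀ᶠ p in 𝓝 p₀, fderiv 𝕜 f p (0, 1) ≠ 0 := by
    refine (hf.fderiv.continuousAt.clm_apply continuousAt_const).eventually_ne ?_
    rwa [← deriv_snd_eq_fderiv_apply hf.differentiableAt]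
  filter_upwards [fderiv_ne_zero, hf.eventually_analyticAt] with p hp hfp
  rwa [deriv_snd_eq_fderiv_apply hfp.differentiableAt]

theorem exists_analyticAt_implicit_simple_zero [RCLike 𝕜] [NormedSpace 𝕜 E] [CompleteSpace E]
    {f : E × 𝕜 → 𝕜} {x₀ : E} {z₀ : 𝕜} (hf : AnalyticAt 𝕜 f (x₀, z₀)) (hzero : f (x₀, z₀) = 0)
    (hderiv : deriv (fun z => f (x₀, z)) z₀ ≠ 0) :
    ∃ σ : E → 𝕜, AnalyticAt 𝕜 σ x₀ ∧ σ x₀ = z₀ ∧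
      ∀ᶠ x in 𝓝 x₀, f (x, σ x) = 0 ∧ deriv (fun z => f (x, z)) (σ x) ≠ 0 := by
  have hf' : ContDiffAt 𝕜 ω f (x₀, z₀) := hf.contDiffAt
  have invertible : (fderiv 𝕜 f (x₀, z₀) ∘L .inr 𝕜 E 𝕜).IsInvertible := by
    refine ⟨ContinuousLinearEquiv.unitsEquivAut 𝕜 (Units.mk0 _ hderiv), ?_⟩
    ext
    simp [deriv_snd_eq_fderiv_apply (p := (x₀, z₀)) hf.differentiableAt]
  have ω_ne_zero : (ω : WithTop ℕ∞) ≠ 0 := by simp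
  let σ := hf'.implicitFunction ω_ne_zero invertible
  have σ_apply : σ x₀ = z₀ := hf'.implicitFunction_apply_self ω_ne_zero invertible
  have hσ : AnalyticAt 𝕜 σ x₀ :=
    (hf'.contDiffAt_implicitFunction ω_ne_zero invertible).analyticAt
  have graph_tendsto : Filter.Tendsto (fun x => (x, σ x)) (𝓝 x₀) (𝓝 (x₀, z₀)) :=
    σ_apply ▸ continuousAt_id.prodMk hσ.continuousAt
  refine ⟨σ, hσ, σ_apply, .and ?_ ?_⟩
  · simpa only [hzero] using hf'.eventually_apply_implicitFunction ω_ne_zero invertible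
  · exact graph_tendsto.eventually (eventually_deriv_snd_ne_zero hf hderiv)

end ImplicitFunction

section Perturbation

variable {𝕜 E n : Type*} [NormedAddCommGroup E] [Fintype n] [DecidableEq n]

theorem exists_analyticAt_eigenvector [NontriviallyNormedField 𝕜] [NormedSpace 𝕜 E]
    {A : E → Matrix n n 𝕜} {x₀ : E} {σ : E → 𝕜} {v₀ : n → 𝕜}
    (hA : ∀ i j, AnalyticAt 𝕜 (A · i j) x₀) (hσ : AnalyticAt 𝕜 σ x₀)
    (hderiv : ¬ (A x₀).charpoly.derivative.IsRoot (σ x₀)) (heig : A x₀ *ᵥ v₀ = σ x₀ • v₀) :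
    ∃ v : E → n → 𝕜, AnalyticAt 𝕜 v x₀ ∧ v x₀ = v₀ ∧
      ∀ x, (A x).charpoly.IsRoot (σ x) → A x *ᵥ v x = σ x • v x := by
  set c := (A x₀).charpoly.derivative.eval (σ x₀)
  refine ⟨fun x => c⁻¹ • ((scalar n (σ x) - A x).adjugate *ᵥ v₀), ?_, ?_, fun x hx => ?_⟩
  · have adjugate_analyticAt :=
      analyticAt_adjugate_apply (analyticAt_scalar_sub_apply hσ hA)
    refine .pi fun i => ?_
    simp only [Pi.smul_apply, smul_eq_mul, mulVec, dotProduct]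
    fun_prop
  · simp only [adjugate_scalar_sub_mulVec_of_mulVec_eq_smul heig]
    exact inv_smul_smul₀ hderiv v₀
  · rw [mulVec_smul, mulVec_adjugate_scalar_sub_mulVec_of_isRoot_charpoly hx, smul_comm]

variable [RCLike 𝕜] [NormedSpace 𝕜 E] [CompleteSpace E]
  {A : E → Matrix n n 𝕜} {x₀ : E} {σ₀ : 𝕜}

theorem exists_analyticAt_simple_root_charpoly (hA : ∀ i j, AnalyticAt 𝕜 (A · i j) x₀)
    (hsimple : (A x₀).charpoly.rootMultiplicity σ₀ = 1) :
    ∃ σ : E → 𝕜, AnalyticAt 𝕜 σ x₀ ∧ σ x₀ = σ₀ ∧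
      ∀ᶠ x in 𝓝 x₀, (A x).charpoly.rootMultiplicity (σ x) = 1 := by
  simp only [rootMultiplicity_charpoly_eq_one_iff, IsRoot, ← Polynomial.deriv] at hsimple ⊢
  exact exists_analyticAt_implicit_simple_zero (analyticAt_eval_charpoly hA) hsimple.1 hsimple.2

theorem stmt6_general (hA : ∀ i j, AnalyticAt 𝕜 (A · i j) x₀)
    (hsimple : (A x₀).charpoly.rootMultiplicity σ₀ = 1)
    {v₀ : n → 𝕜} (hv₀ : v₀ ≠ 0) (heig : A x₀ *ᵥ v₀ = σ₀ • v₀) :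
    ∃ r > (0 : ℝ), ∃ σ : E → 𝕜, ∃ v : E → n → 𝕜,
      AnalyticOnNhd 𝕜 σ (Metric.ball x₀ r) ∧ AnalyticOnNhd 𝕜 v (Metric.ball x₀ r) ∧
      σ x₀ = σ₀ ∧ v x₀ = v₀ ∧
      ∀ x ∈ Metric.ball x₀ r,
        v x ≠ 0 ∧ A x *ᵥ v x = σ x • v x ∧ (A x).charpoly.rootMultiplicity (σ x) = 1 := by
  obtain ⟨σ, hσ, rfl, σ_simple⟩ := exists_analyticAt_simple_root_charpoly hA hsimple
  obtain ⟨v, hv, rfl, v_eigen⟩ :=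
    exists_analyticAt_eigenvector hA hσ (rootMultiplicity_charpoly_eq_one_iff.1 hsimple).2 heig
  have v_ne_zero : ∀ᶠ x in 𝓝 x₀, v x ≠ 0 := hv.continuousAt.eventually_ne hv₀
  obtain ⟨r, hr, hball⟩ := Metric.eventually_nhds_iff_ball.1 <|
    hσ.eventually_analyticAt.and <| hv.eventually_analyticAt.and <| v_ne_zero.and σ_simple
  refine ⟨r, hr, σ, v, fun x hx => (hball x hx).1, fun x hx => (hball x hx).2.1, rfl, rfl,
    fun x hx => ?_⟩
  obtain ⟨-, -, vx_ne_zero, σx_simple⟩ := hball x hx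
  exact ⟨vx_ne_zero, v_eigen x (rootMultiplicity_charpoly_eq_one_iff.1 σx_simple).1, σx_simple⟩

end Perturbation

/-- Analytic perturbation of a simple eigenvalue: a simple eigenvalue `σ₀` of `A`
with eigenvector `v₀` extends to analytic families `σ(ε)`, `v(ε)` of simple
eigenvalues and eigenvectors of `A + εB`. -/
theorem stmt6 (d : ℕ) (hd : 1 ≤ d) (A B : Matrix (Fin d) (Fin d) ℂ)
    (σ₀ : ℂ) (hsimple : Polynomial.rootMultiplicity σ₀ (Matrix.charpoly A) = 1)
    (v₀ : Fin d → ℂ) (hv₀ : v₀ ≠ 0) (heig : A.mulVec v₀ = σ₀ • v₀) :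
    ∃ ε₀ > (0:ℝ), ∃ σ : ℂ → ℂ, ∃ v : ℂ → (Fin d → ℂ),
      AnalyticOnNhd ℂ σ (Metric.ball 0 ε₀) ∧ AnalyticOnNhd ℂ v (Metric.ball 0 ε₀) ∧
      σ 0 = σ₀ ∧ v 0 = v₀ ∧
      ∀ ε : ℂ, ‖ε‖ < ε₀ →
        v ε ≠ 0 ∧ (A + ε • B).mulVec (v ε) = σ ε • v ε ∧
        Polynomial.rootMultiplicity (σ ε) (Matrix.charpoly (A + ε • B)) = 1 := by
  simpa only [mem_ball_zero_iff] using stmt6_general (A := fun ε : ℂ => A + ε • B) (x₀ := 0)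
    (fun i j => by simp only [Matrix.add_apply, Matrix.smul_apply, smul_eq_mul]; fun_prop)
    (by simpa using hsimple) hv₀ (by simpa using heig)
end

section
/- Let 0 ≤ δ < 1, C > 0, and let ω be a nonzero real number. Let (γ_j)_{j≥1} be real numbers with |γ_j| ≤ C j^δ for all j ≥ 1, and let (a_k)_{k≥1} be real numbers with |a_k| ≤ 1/2 for all k ≥ 1. Then there exist η > 0, ε₀ > 0 and integers j₀, N ≥ 1 such that for all integers j ≥ j₀ and all real ε with |ε| < ε₀, the series Σ_{k=N+1}^{∞} |γ_j|^{2k} |a_k| |ε|^{2k} / (|ω| j)^{2k−1} converges and its sum is at most j^{−η}. -/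
open scoped BigOperators

/-!
Put `x = |γ_j| |ε| / (|ω| j)`. The `k`-th term equals `|ω| j |a_k| x ^ (2 k)`. For `ε` in any
prescribed bounded set `x = O(j ^ (δ - 1))` tends to zero, so the tail from `N + 1` on is dominated
by a geometric series with sum `O(j ^ (1 - 2 (1 - δ) (N + 1)))`, which for `N` large beats any
prescribed power `j ^ (-η)`.
-/

open Filter Topology

lemma hasSum_const_mul_pow_add (c : ℝ) {r : ℝ} (hr₀ : 0 ≤ r) (hr₁ : r < 1) (M : ℕ) :
    HasSum (fun k : ℕ => c * r ^ (M + k)) (c * r ^ M * (1 - r)⁻¹) := by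
  simpa only [pow_add, mul_assoc] using
    (hasSum_geometric_of_lt_one hr₀ hr₁).mul_left (c * r ^ M)

section Term

/-- The absolute value of the term `a k * (g * e) ^ (2 * k) / w ^ (2 * k - 1)` in the expansion of
`√(w ^ 2 + e ^ 2 * g ^ 2)` in powers of `e`, for `w > 0`. The exponent `2 * k - 1` is truncated at
`k = 0`, so only `k ≠ 0` is meaningful. -/
noncomputable def sqrtExpansionTerm (a : ℕ → ℝ) (g e w : ℝ) (k : ℕ) : ℝ :=
  |g| ^ (2 * k) * |a k| * |e| ^ (2 * k) / w ^ (2 * k - 1)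

variable {a : ℕ → ℝ} {g e w y A : ℝ} {k M : ℕ}

lemma sqrtExpansionTerm_nonneg (hw : 0 ≤ w) : 0 ≤ sqrtExpansionTerm a g e w k := by
  unfold sqrtExpansionTerm
  positivity

lemma sqrtExpansionTerm_eq (hw : w ≠ 0) (hk : k ≠ 0) :
    sqrtExpansionTerm a g e w k = w * |a k| * ((|g| * |e| / w) ^ 2) ^ k := by
  have hpow : w ^ (2 * k) = w ^ (2 * k - 1) * w := (pow_sub_one_mul (by lia) w).symm
  rw [sqrtExpansionTerm, ← pow_mul, div_pow, mul_pow, hpow]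
  field_simp

lemma sqrtExpansionTerm_le (hw : 0 < w) (hk : k ≠ 0) (hy : |g| * |e| / w ≤ y)
    (ha : |a k| ≤ A) : sqrtExpansionTerm a g e w k ≤ w * A * (y ^ 2) ^ k := by
  rw [sqrtExpansionTerm_eq hw.ne' hk]
  have hA : 0 ≤ A := (abs_nonneg _).trans ha
  gcongr

lemma summable_sqrtExpansionTerm_add (hw : 0 < w) (hM : M ≠ 0) (hy : |g| * |e| / w ≤ y)
    (hy₁ : y ^ 2 < 1) (ha : ∀ k, M ≤ k → |a k| ≤ A) :
    Summable fun k => sqrtExpansionTerm a g e w (M + k) :=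
  .of_nonneg_of_le (fun _ => sqrtExpansionTerm_nonneg hw.le)
    (fun _ => sqrtExpansionTerm_le hw (by lia) hy (ha _ (by lia)))
    (hasSum_const_mul_pow_add (w * A) (sq_nonneg y) hy₁ M).summable

lemma tsum_sqrtExpansionTerm_add_le (hw : 0 < w) (hM : M ≠ 0) (hy : |g| * |e| / w ≤ y)
    (hy₁ : y ^ 2 < 1) (ha : ∀ k, M ≤ k → |a k| ≤ A) :
    ∑' k, sqrtExpansionTerm a g e w (M + k) ≤ w * A * (y ^ 2) ^ M * (1 - y ^ 2)⁻¹ :=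
  hasSum_le (fun _ => sqrtExpansionTerm_le hw (by lia) hy (ha _ (by lia)))
    (summable_sqrtExpansionTerm_add hw hM hy hy₁ ha).hasSum
    (hasSum_const_mul_pow_add (w * A) (sq_nonneg y) hy₁ M)

end Term

lemma tendsto_const_mul_rpow_atTop_zero (K : ℝ) {p : ℝ} (hp : p < 0) :
    Tendsto (fun t : ℝ => K * t ^ p) atTop (𝓝 0) := by
  simpa using (tendsto_rpow_neg_atTop (neg_pos.2 hp)).const_mul K

lemma eventually_add_mul_natCast_lt {s : ℝ} (hs : s < 0) (c q : ℝ) :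
    ∀ᶠ n : ℕ in atTop, c + s * n < q :=
  (tendsto_atBot_add_const_left _ c
    (tendsto_natCast_atTop_atTop.const_mul_atTop_of_neg hs)).eventually_lt_atBot q

lemma mul_sq_rpow_pow_eq {t : ℝ} (ht : 0 < t) (K p : ℝ) (M : ℕ) :
    t * ((K * t ^ p) ^ 2) ^ M = K ^ (2 * M) * t ^ (1 + 2 * p * M) := by
  rw [← pow_mul, mul_pow, Real.rpow_add ht, Real.rpow_one, ← Real.rpow_mul_natCast ht.le]
  push_cast
  ring_nf

lemma eventually_geometric_tail_le_rpow {p q : ℝ} (hp : p < 0) {M : ℕ}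
    (hM : 1 + 2 * p * M < q) (B K : ℝ) :
    ∀ᶠ t : ℝ in atTop,
      B * t * ((K * t ^ p) ^ 2) ^ M * (1 - (K * t ^ p) ^ 2)⁻¹ ≤ t ^ q := by
  have hinv : Tendsto (fun t : ℝ => (1 - (K * t ^ p) ^ 2)⁻¹) atTop (𝓝 1) := by
    simpa using (((tendsto_const_mul_rpow_atTop_zero K hp).pow 2).const_sub 1).inv₀ (by simp)
  have hlim := (tendsto_const_mul_rpow_atTop_zero (B * K ^ (2 * M)) (sub_neg.2 hM)).mul hinv
  rw [zero_mul] at hlim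
  filter_upwards [hlim.eventually_le_const one_pos, eventually_gt_atTop 0] with t hle ht
  calc B * t * ((K * t ^ p) ^ 2) ^ M * (1 - (K * t ^ p) ^ 2)⁻¹
      = B * K ^ (2 * M) * t ^ (1 + 2 * p * M - q) * (1 - (K * t ^ p) ^ 2)⁻¹ * t ^ q := by
        rw [mul_assoc B, mul_sq_rpow_pow_eq ht, Real.rpow_sub ht]
        field_simp
    _ ≤ 1 * t ^ q := by gcongr
    _ = t ^ q := one_mul _

lemma mul_div_le_const_mul_rpow_sub_one {C E W δ g e t : ℝ} (hW : 0 < W) (ht : 0 < t)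
    (hg : |g| ≤ C * t ^ δ) (he : |e| ≤ E) :
    |g| * |e| / (W * t) ≤ C * E / W * t ^ (δ - 1) := by
  calc |g| * |e| / (W * t) ≤ C * t ^ δ * E / (W * t) := by
        have hCt : 0 ≤ C * t ^ δ := (abs_nonneg g).trans hg
        gcongr
    _ = C * E / W * t ^ (δ - 1) := by
        rw [Real.rpow_sub_one ht.ne']
        field_simp

lemma eventually_tsum_sqrtExpansionTerm_le_rpow {δ C ω A η : ℝ} (hδ : δ < 1) (hω : ω ≠ 0)
    {γ a : ℕ → ℝ} (hγ : ∀ᶠ j : ℕ in atTop, |γ j| ≤ C * (j : ℝ) ^ δ) {M : ℕ} (hM : M ≠ 0)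
    (ha : ∀ k, M ≤ k → |a k| ≤ A) (hη : 1 + 2 * (δ - 1) * M < -η) (E : ℝ) :
    ∀ᶠ j : ℕ in atTop, ∀ ε : ℝ, |ε| ≤ E →
      Summable (fun k => sqrtExpansionTerm a (γ j) ε (|ω| * j) (M + k)) ∧
        ∑' k, sqrtExpansionTerm a (γ j) ε (|ω| * j) (M + k) ≤ (j : ℝ) ^ (-η) := by
  have hω' : 0 < |ω| := abs_pos.2 hω
  have hδ' : δ - 1 < 0 := sub_neg.2 hδ
  have hratio : Tendsto (fun t : ℝ => (C * E / |ω| * t ^ (δ - 1)) ^ 2) atTop (𝓝 0) := by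
    simpa using (tendsto_const_mul_rpow_atTop_zero (C * E / |ω|) hδ').pow 2
  have hlt := tendsto_natCast_atTop_atTop.eventually (hratio.eventually_lt_const one_pos)
  have htail := tendsto_natCast_atTop_atTop.eventually
    (eventually_geometric_tail_le_rpow hδ' hη (|ω| * A) (C * E / |ω|))
  filter_upwards [hγ, hlt, htail, eventually_gt_atTop 0] with j hγj hltj htailj hj ε hε
  have hj' : (0 : ℝ) < j := Nat.cast_pos.2 hj
  have hw : 0 < |ω| * j := mul_pos hω' hj'
  have hy := mul_div_le_const_mul_rpow_sub_one hω' hj' hγj hε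
  refine ⟨summable_sqrtExpansionTerm_add hw hM hy hltj ha,
    (tsum_sqrtExpansionTerm_add_le hw hM hy hltj ha).trans ?_⟩
  rwa [mul_right_comm |ω| (j : ℝ) A]

theorem stmt12_general {δ C ω A : ℝ} (hδ : δ < 1) (hω : ω ≠ 0) {γ a : ℕ → ℝ}
    (hγ : ∀ᶠ j : ℕ in atTop, |γ j| ≤ C * (j : ℝ) ^ δ) (ha : ∀ᶠ k in atTop, |a k| ≤ A)
    (η ε₀ : ℝ) :
    ∃ j₀ N : ℕ, 1 ≤ j₀ ∧ 1 ≤ N ∧ ∀ j : ℕ, j₀ ≤ j → ∀ ε : ℝ, |ε| < ε₀ →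
      Summable (fun k => sqrtExpansionTerm a (γ j) ε (|ω| * j) (N + 1 + k)) ∧
        ∑' k, sqrtExpansionTerm a (γ j) ε (|ω| * j) (N + 1 + k) ≤ (j : ℝ) ^ (-η) := by
  have hrate : ∀ᶠ M : ℕ in atTop, 1 + 2 * (δ - 1) * M < -η :=
    eventually_add_mul_natCast_lt (by linarith) 1 (-η)
  obtain ⟨N, hN, haN, hηN⟩ := ((eventually_ge_atTop 1).and ((tendsto_add_atTop_nat 1).eventually
    ((eventually_forall_ge_atTop.2 ha).and hrate))).exists
  have htail := eventually_tsum_sqrtExpansionTerm_le_rpow hδ hω hγ N.succ_ne_zero haN hηN ε₀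
  obtain ⟨j₀, hj₀, hbound⟩ :=
    ((eventually_ge_atTop 1).and (eventually_forall_ge_atTop.2 htail)).exists
  exact ⟨j₀, N, hj₀, hN, fun j hj ε hε => hbound j hj ε hε.le⟩

/-- Tail estimate: for perturbations of order `δ < 1` the tail of the eigenvalue
expansion is `O(j^{-η})` uniformly for `|ε| < ε₀`. -/
theorem stmt12 (δ C ω : ℝ) (hδ0 : 0 ≤ δ) (hδ1 : δ < 1) (hC : 0 < C) (hω : ω ≠ 0)
    (γ : ℕ → ℝ) (hγ : ∀ j : ℕ, 1 ≤ j → |γ j| ≤ C * (j:ℝ) ^ δ)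
    (a : ℕ → ℝ) (ha : ∀ k : ℕ, 1 ≤ k → |a k| ≤ 1/2) :
    ∃ η > (0:ℝ), ∃ ε₀ > (0:ℝ), ∃ j₀ N : ℕ, 1 ≤ j₀ ∧ 1 ≤ N ∧
      ∀ j : ℕ, j₀ ≤ j → ∀ ε : ℝ, |ε| < ε₀ →
        Summable (fun k : ℕ =>
          |γ j| ^ (2*(N+1+k)) * |a (N+1+k)| * |ε| ^ (2*(N+1+k)) /
            (|ω| * j) ^ (2*(N+1+k) - 1)) ∧
        (∑' k : ℕ, |γ j| ^ (2*(N+1+k)) * |a (N+1+k)| * |ε| ^ (2*(N+1+k)) /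
            (|ω| * j) ^ (2*(N+1+k) - 1)) ≤ (j:ℝ) ^ (-η) :=
  ⟨1, one_pos, 1, one_pos, stmt12_general hδ1 hω
    (eventually_atTop.2 ⟨1, hγ⟩) (eventually_atTop.2 ⟨1, ha⟩) 1 1⟩
end

section
/- Let α, β ∈ ℝ. The following are equivalent: (i) there exist constants C > 0, θ > 0 and j₀ such that for every integer j ≥ j₀ and every integer τ, √((τ + jα)² + j²β²) ≥ C j^{−θ}; (ii) β ≠ 0, or α is irrational and α is not a Liouville number. -/
/-!
The square root in condition (i) is the modulus `‖τ + j z‖` for `z = α + iβ`. If `z` is not real,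
its imaginary part alone keeps this modulus away from `0`. If `z = x` is real, then
`|τ + j x| = j |x - (-τ) / j|`, so for irrational `x` a power lower bound says that `x` is not
approximable by rationals to some fixed order, i.e. is not Liouville, while for rational `x`
infinitely many of these quantities vanish.
-/

open Filter

/-- The Diophantine condition on `z`: up to a constant, the distance from `j z` to the integers
decays at most like a power of `j`. It is stated over a normed ring so as to cover both the complex
coefficient of a vector field and a real number. -/
def IsDiophantine {R : Type*} [NormedRing R] (z : R) : Prop :=
  ∃ C > (0 : ℝ), ∃ θ > (0 : ℝ), ∀ᶠ j : ℕ in atTop, ∀ τ : ℤ, C * (j : ℝ) ^ (-θ) ≤ ‖(τ : R) + j * z‖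

theorem isDiophantine_ofReal_iff {x : ℝ} : IsDiophantine (x : ℂ) ↔ IsDiophantine x := by
  have norm_eq (j : ℕ) (τ : ℤ) : ‖(τ : ℂ) + j * x‖ = ‖(τ : ℝ) + j * x‖ := by
    rw [← Complex.norm_real]
    push_cast
    rfl
  simp only [IsDiophantine, norm_eq]

theorem frequently_exists_intCast_add_mul_eq_zero (r : ℚ) :
    ∃ᶠ j : ℕ in atTop, ∃ τ : ℤ, (τ : ℚ) + j * r = 0 := by
  refine frequently_atTop.2 fun a ↦
    ⟨a * r.den, Nat.le_mul_of_pos_right a r.den_pos, -(a * r.num), ?_⟩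
  push_cast
  rw [mul_assoc, Rat.den_mul_eq_num]
  ring

theorem eventually_mul_rpow_le_mul_rpow {p q C : ℝ} (D : ℝ) (hpq : p < q) (hC : 0 < C) :
    ∀ᶠ x : ℝ in atTop, D * x ^ p ≤ C * x ^ q := by
  filter_upwards [(tendsto_rpow_atTop (sub_pos.2 hpq)).eventually_ge_atTop (D / C),
    eventually_gt_atTop 0] with x hx hx0
  calc D * x ^ p
      ≤ C * x ^ (q - p) * x ^ p := by
        gcongr
        exact (div_le_iff₀' hC).1 hx
    _ = C * x ^ q := by rw [mul_assoc, ← Real.rpow_add hx0, sub_add_cancel]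

theorem abs_sub_div_lt_div_rpow_add_one_iff {x y t C p : ℝ} (ht : 0 < t) :
    |x - y / t| < C / t ^ (p + 1) ↔ |t * x - y| < C * t ^ (-p) := by
  have sub_eq : t * x - y = t * (x - y / t) := by rw [mul_sub, mul_div_cancel₀ y ht.ne']
  have bound_eq : C * t ^ (-p) = t * (C / t ^ (p + 1)) := by
    rw [Real.rpow_neg ht.le, Real.rpow_add_one ht.ne']
    field_simp
  rw [sub_eq, abs_mul, abs_of_pos ht, bound_eq, mul_lt_mul_iff_right₀ ht]

theorem liouvilleWith_add_one_iff_of_irrational {x p : ℝ} (hx : Irrational x) :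
    LiouvilleWith (p + 1) x ↔
      ∃ C : ℝ, ∃ᶠ j : ℕ in atTop, ∃ τ : ℤ, |τ + j * x| < C * (j : ℝ) ^ (-p) := by
  refine exists_congr fun C ↦ frequently_congr ?_
  filter_upwards [eventually_gt_atTop 0] with j hj
  refine (Equiv.neg ℤ).exists_congr fun m ↦ ?_
  have ne_div : x ≠ m / j := fun h ↦ hx ⟨m / j, by simp [h]⟩
  simp [ne_div, abs_sub_div_lt_div_rpow_add_one_iff (Nat.cast_pos.2 hj), neg_add_eq_sub]

namespace IsDiophantine

theorem ne_ratCast {K : Type*} [NormedField K] [CharZero K] {z : K} (hz : IsDiophantine z)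
    (r : ℚ) : z ≠ r := by
  rintro rfl
  obtain ⟨C, hC, θ, -, hle⟩ := hz
  obtain ⟨j, ⟨τ, hτ⟩, hle, hj⟩ := ((frequently_exists_intCast_add_mul_eq_zero r).and_eventually
    (hle.and (eventually_gt_atTop 0))).exists
  have eq_zero : (τ : K) + j * r = 0 := by exact_mod_cast hτ
  have bound_pos : 0 < C * (j : ℝ) ^ (-θ) := by positivity
  exact bound_pos.not_ge (by simpa [eq_zero] using hle τ)

theorem irrational {x : ℝ} (hx : IsDiophantine x) : Irrational x :=
  fun ⟨r, hr⟩ ↦ hx.ne_ratCast r hr.symm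

theorem not_liouville {x : ℝ} (hx : IsDiophantine x) : ¬ Liouville x := by
  intro hL
  have hirr := hx.irrational
  obtain ⟨C, hC, θ, -, hle⟩ := hx
  obtain ⟨D, hD⟩ := (liouvilleWith_add_one_iff_of_irrational hirr).1 (hL.liouvilleWith (θ + 1 + 1))
  have hDC := tendsto_natCast_atTop_atTop.eventually
    (eventually_mul_rpow_le_mul_rpow D (neg_lt_neg (lt_add_one θ)) hC)
  obtain ⟨j, ⟨τ, hlt⟩, hle, hDC⟩ := (hD.and_eventually (hle.and hDC)).exists
  exact (hlt.trans_le hDC).not_ge (hle τ)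

theorem of_irrational_of_not_liouville {x : ℝ} (hx : Irrational x) (hL : ¬ Liouville x) :
    IsDiophantine x := by
  obtain ⟨p, hp⟩ := not_forall.1 (mt forall_liouvilleWith_iff.1 hL)
  have not_liouvilleWith : ¬ LiouvilleWith (max p 1 + 1) x :=
    fun h ↦ hp (h.mono ((le_max_left p 1).trans (lt_add_one _).le))
  rw [liouvilleWith_add_one_iff_of_irrational hx] at not_liouvilleWith
  refine ⟨1, one_pos, max p 1, by positivity, ?_⟩
  simpa using not_exists.1 not_liouvilleWith 1

theorem of_im_ne_zero {z : ℂ} (hz : z.im ≠ 0) : IsDiophantine z := by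
  refine ⟨|z.im|, abs_pos.2 hz, 1, one_pos, ?_⟩
  filter_upwards [eventually_ge_atTop 1] with j hj τ
  have one_le : (1 : ℝ) ≤ j := Nat.one_le_cast.2 hj
  calc |z.im| * (j : ℝ) ^ (-1 : ℝ)
      ≤ |z.im| * j := by
        gcongr
        exact (Real.rpow_le_one_of_one_le_of_nonpos one_le (by norm_num)).trans one_le
    _ = |((τ : ℂ) + j * z).im| := by simp [abs_mul, mul_comm]
    _ ≤ ‖(τ : ℂ) + j * z‖ := Complex.abs_im_le_norm _

end IsDiophantine

theorem isDiophantine_real_iff {x : ℝ} : IsDiophantine x ↔ Irrational x ∧ ¬ Liouville x :=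
  ⟨fun h ↦ ⟨h.irrational, h.not_liouville⟩,
    fun h ↦ .of_irrational_of_not_liouville h.1 h.2⟩

theorem isDiophantine_complex_iff {z : ℂ} :
    IsDiophantine z ↔ z.im ≠ 0 ∨ (Irrational z.re ∧ ¬ Liouville z.re) := by
  by_cases hz : z.im = 0
  · lift z to ℝ using hz
    simp [isDiophantine_ofReal_iff, isDiophantine_real_iff]
  · simp [hz, IsDiophantine.of_im_ne_zero hz]

theorem norm_ofReal_add_ofReal_mul (a b : ℝ) (z : ℂ) :
    ‖(a : ℂ) + b * z‖ = √((a + b * z.re) ^ 2 + b ^ 2 * z.im ^ 2) := by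
  rw [Complex.norm_eq_sqrt_sq_add_sq]
  simp [mul_pow]

/-- The Diophantine condition characterizing global hypoellipticity of
`D_t + (α + iβ) D_x` on `𝕋²`: it holds iff `β ≠ 0` or `α` is an irrational
non-Liouville number. -/
theorem stmt14 (α β : ℝ) :
    (∃ C > (0:ℝ), ∃ θ > (0:ℝ), ∃ j₀ : ℕ, ∀ j : ℕ, j₀ ≤ j → ∀ τ : ℤ,
        Real.sqrt (((τ:ℝ) + j * α)^2 + (j:ℝ)^2 * β^2) ≥ C * (j:ℝ) ^ (-θ)) ↔
      (β ≠ 0 ∨ (Irrational α ∧ ¬ Liouville α)) := by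
  have norm_eq (j : ℕ) (τ : ℤ) :
      √(((τ : ℝ) + j * α) ^ 2 + (j : ℝ) ^ 2 * β ^ 2) = ‖(τ : ℂ) + j * (⟨α, β⟩ : ℂ)‖ := by
    exact_mod_cast (norm_ofReal_add_ofReal_mul τ j ⟨α, β⟩).symm
  simpa only [IsDiophantine, eventually_atTop, norm_eq] using
    isDiophantine_complex_iff (z := ⟨α, β⟩)
end
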